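/- Let r ≥ 5 be a rational prime, K a totally real number field, K⁺ := K(ζ_r + ζ_r⁻¹), and p a rational prime. Let (x, y, z) ∈ 𝒪_{K⁺}³ be a nontrivial primitive solution of x^r + y^r = z^p, and let A, B, C ∈ 𝒪_{K⁺} be as in the Frey construction. Set Δ := 2⁴·(ABC)² and c₄ := −2⁴·(AB + BC + CA) (the discriminant and c₄-invariant of the Weierstrass model Y² = X(X−A)(X+B)). Then for every nonzero prime ideal 𝔭 of 𝒪_{K⁺} lying above neither 2 nor r: p divides v_𝔭(Δ); and if 𝔭 ∣ ABC then v_𝔭(c₄) = 0. -/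

import Mathlib

open NumberField IsDedekindDomain IntermediateField
open scoped Classical

/-- The additive `v`-adic valuation of a nonzero element of the fraction field,
normalized so that a uniformizer has valuation `1` (junk value `0` at `x = 0`). -/
noncomputable def addVal {R : Type*} [CommRing R] [IsDedekindDomain R]
    {F : Type*} [Field F] [Algebra R F] [IsFractionRing R F]
    (v : HeightOneSpectrum R) (x : F) : ℤ :=
  if hx : x = 0 then 0
  else -Multiplicative.toAdd (WithZero.unzero ((v.valuation F).ne_zero_iff.mpr hx))

/-!
Let `m = (n - 1) / 2`. Pairing `ζ ^ j` with `ζ ^ (n - j)` in `x ^ n + y ^ n = ∏ (x + ζ ^ j y)` gives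
`(x + y) f₁(x, y) ⋯ fₘ(x, y) = z ^ p`, while `f₀ = (x + y) ^ 2`. The same factorization of
`X ^ n + 1`, reduced modulo a prime `𝔭 ∤ n`, is that of a separable polynomial, so the
`a k = ζ ^ k + ζ ^ (-k)` with `k ≤ m` are pairwise distinct modulo `𝔭`. As `x` and `y` are coprime,
`𝔭` then divides at most one of the factors of `z ^ p`, hence each of them has `𝔭`-adic valuation
divisible by `p`. Likewise `𝔭` divides at most one of `A`, `B`, `C`; if it divides one, then
`AB + BC + CA` is congruent to the product of the other two.
-/

section addVal

open Finset

variable {R : Type*} [CommRing R] [IsDedekindDomain R]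
    {F : Type*} [Field F] [Algebra R F] [IsFractionRing R F] (v : HeightOneSpectrum R)

lemma addVal_eq_neg_log (x : F) : addVal v x = -WithZero.log (v.valuation F x) := by
  by_cases hx : x = 0
  · simp [addVal, hx]
  · rw [addVal, dif_neg hx, neg_inj]
    conv_rhs => rw [← WithZero.coe_unzero ((v.valuation F).ne_zero_iff.mpr hx)]
    rfl

lemma addVal_mul {x y : F} (hx : x ≠ 0) (hy : y ≠ 0) :
    addVal v (x * y) = addVal v x + addVal v y := by
  have hvx := (v.valuation F).ne_zero_iff.mpr hx
  have hvy := (v.valuation F).ne_zero_iff.mpr hy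
  simp only [addVal_eq_neg_log, map_mul, WithZero.log_mul hvx hvy, neg_add]

lemma addVal_pow (x : F) (n : ℕ) : addVal v (x ^ n) = n * addVal v x := by
  simp only [addVal_eq_neg_log, map_pow, WithZero.log_pow, nsmul_eq_mul, mul_neg]

lemma addVal_algebraMap_eq_zero {x : R} (hx : x ∉ v.asIdeal) :
    addVal v (algebraMap R F x) = 0 := by
  rw [addVal_eq_neg_log, v.valuation_of_algebraMap, v.intValuation_eq_one_iff.mpr hx,
    WithZero.log_one, neg_zero]

-- When `x * y = 0`, its junk valuation `0` is divisible by `d`.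
lemma dvd_addVal_mul {d : ℤ} {x y : F} (hx : d ∣ addVal v x) (hy : d ∣ addVal v y) :
    d ∣ addVal v (x * y) := by
  rcases eq_or_ne x 0 with rfl | hx0
  · rwa [zero_mul]
  rcases eq_or_ne y 0 with rfl | hy0
  · rwa [mul_zero]
  rw [addVal_mul v hx0 hy0]
  exact dvd_add hx hy

lemma dvd_addVal_pow {d : ℤ} {x : F} (hx : d ∣ addVal v x) (n : ℕ) : d ∣ addVal v (x ^ n) := by
  rw [addVal_pow]
  exact hx.mul_left _

lemma dvd_addVal_algebraMap_of_notMem (d : ℤ) {x : R} (hx : x ∉ v.asIdeal) :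
    d ∣ addVal v (algebraMap R F x) := by
  rw [addVal_algebraMap_eq_zero v hx]
  exact dvd_zero d

lemma dvd_addVal_two_pow_four_mul_sq {d : ℤ} {A B C : R} (h2 : (2 : R) ∉ v.asIdeal)
    (hA : d ∣ addVal v (algebraMap R F A)) (hB : d ∣ addVal v (algebraMap R F B))
    (hC : d ∣ addVal v (algebraMap R F C)) :
    d ∣ addVal v (algebraMap R F (2 ^ 4 * (A * B * C) ^ 2)) := by
  rw [map_mul, map_pow _ 2, map_pow, map_mul, map_mul]
  exact dvd_addVal_mul v (dvd_addVal_pow v (dvd_addVal_algebraMap_of_notMem v d h2) 4)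
    (dvd_addVal_pow v (dvd_addVal_mul v (dvd_addVal_mul v hA hB) hC) 2)

lemma dvd_addVal_of_prod_eq_pow {ι : Type*} {s : Finset ι} {g : ι → R} {z : R} {p : ℕ}
    (hz : z ≠ 0) (hprod : ∏ i ∈ s, g i = z ^ p)
    (hcop : (s : Set ι).Pairwise fun i j => g i ∈ v.asIdeal → g j ∉ v.asIdeal)
    {i : ι} (hi : i ∈ s) : (p : ℤ) ∣ addVal v (algebraMap R F (g i)) := by
  by_cases hmem : g i ∈ v.asIdeal
  · have hrest : ∏ j ∈ s.erase i, g j ∉ v.asIdeal := by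
      rw [v.isPrime.prod_mem_iff]
      rintro ⟨j, hj, hgj⟩
      exact hcop hi (mem_of_mem_erase hj) (ne_of_mem_erase hj).symm hmem hgj
    rw [← mul_prod_erase s g hi] at hprod
    have hne : algebraMap R F (g i * ∏ j ∈ s.erase i, g j) ≠ 0 := by
      rw [hprod, map_pow]
      exact pow_ne_zero p ((FaithfulSMul.algebraMap_eq_zero_iff R F).not.mpr hz)
    rw [map_mul] at hne
    refine ⟨addVal v (algebraMap R F z), ?_⟩
    calc addVal v (algebraMap R F (g i))
        = addVal v (algebraMap R F (g i * ∏ j ∈ s.erase i, g j)) := by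
          rw [map_mul, addVal_mul v (left_ne_zero_of_mul hne) (right_ne_zero_of_mul hne),
            addVal_algebraMap_eq_zero v hrest, add_zero]
      _ = p * addVal v (algebraMap R F z) := by rw [hprod, map_pow, addVal_pow]
  · exact dvd_addVal_algebraMap_of_notMem v p hmem

end addVal

section freyForm

variable {R : Type*} [CommRing R]

/-- The binary form `f_k(x, y) = x² + a xy + y²` of the Frey construction, as a function of its
middle coefficient `a = ζ^k + ζ^{-k}`. -/
def freyForm (a x y : R) : R := x ^ 2 + a * x * y + y ^ 2

/-- The factors of `x^n + y^n` for odd `n`, when `a k = ζ^k + ζ^{-k}` with `ζ` a primitive `n`-th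
root of unity. The index `0` carries the linear factor `x + y`, whose square is
`freyForm (a 0) x y`; every other index `k` carries `freyForm (a k) x y` itself. -/
def freyFactor (a : ℕ → R) (x y : R) : ℕ → R
  | 0 => x + y
  | k + 1 => freyForm (a (k + 1)) x y

lemma exists_freyForm_eq_freyFactor_pow {a : ℕ → R} (ha : a 0 = 2) (x y : R) (k : ℕ) :
    ∃ e ≠ 0, freyForm (a k) x y = freyFactor a x y k ^ e := by
  cases k with
  | zero => exact ⟨2, two_ne_zero, by rw [freyForm, freyFactor, ha]; ring⟩
  | succ k => exact ⟨1, one_ne_zero, (pow_one _).symm⟩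

lemma freyFactor_dvd_freyForm {a : ℕ → R} (ha : a 0 = 2) (x y : R) (k : ℕ) :
    freyFactor a x y k ∣ freyForm (a k) x y := by
  obtain ⟨e, he, heq⟩ := exists_freyForm_eq_freyFactor_pow ha x y k
  exact heq ▸ dvd_pow_self _ he

lemma map_freyFactor {S : Type*} [CommRing S] (φ : R →+* S) (a : ℕ → R) (x y : R) (k : ℕ) :
    φ (freyFactor a x y k) = freyFactor (φ ∘ a) (φ x) (φ y) k := by
  cases k <;> simp only [freyFactor, freyForm, Function.comp_apply, map_add, map_mul, map_pow]

lemma freyForm_notMem_of_sub_notMem {P : Ideal R} [hP : P.IsPrime] {a b x y : R}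
    (hab : a - b ∉ P) (hxy : IsCoprime x y) (ha : freyForm a x y ∈ P) : freyForm b x y ∉ P := by
  intro hb
  have hmul : (a - b) * (x * y) ∈ P := by
    convert P.sub_mem ha hb using 1
    simp only [freyForm]
    ring
  have hor : x ∈ P ∨ y ∈ P := hP.mem_or_mem ((hP.mem_or_mem hmul).resolve_left hab)
  have hx : x ∈ P := hor.elim id fun hy => hP.mem_of_pow_mem 2 <| by
    convert P.sub_mem ha (P.mul_mem_left (a * x + y) hy) using 1
    simp only [freyForm]
    ring
  have hy : y ∈ P := hor.elim (fun hx => hP.mem_of_pow_mem 2 <| by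
    convert P.sub_mem ha (P.mul_mem_left (x + a * y) hx) using 1
    simp only [freyForm]
    ring) id
  obtain ⟨s, t, hst⟩ := hxy
  exact hP.one_notMem (hst ▸ P.add_mem (P.mul_mem_left s hx) (P.mul_mem_left t hy))

end freyForm

section factorization

open Finset Polynomial

lemma prod_range_two_mul_add_one {M : Type*} [CommMonoid M] (g : ℕ → M) (m : ℕ) :
    ∏ j ∈ range (2 * m + 1), g j = g 0 * ∏ k ∈ range m, g (k + 1) * g (2 * m - k) := by
  rw [prod_range_succ', two_mul, prod_range_add, mul_comm,
    ← prod_range_reflect (fun j => g (m + j + 1)), ← prod_mul_distrib]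
  congr 1
  refine prod_congr rfl fun k hk => ?_
  have hk : k < m := mem_range.mp hk
  rw [show m + (m - 1 - k) + 1 = m + m - k by omega]

lemma pow_add_pow_eq_prod_range {L : Type*} [CommRing L] [IsDomain L] {ζ : L} {n : ℕ}
    (hζ : IsPrimitiveRoot ζ n) (hn : Odd n) (x y : L) :
    x ^ n + y ^ n = ∏ j ∈ range n, (x + ζ ^ j * y) := by
  have hroots : nthRootsFinset n (1 : L) = (range n).image (ζ ^ ·) := by
    ext w
    simp [nthRootsFinset, hζ.nthRoots_eq (one_pow n)]
  rw [hζ.pow_add_pow_eq_prod_add_mul x y hn, hroots, prod_image (by simpa using hζ.injOn_pow)]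

variable {R L : Type*} [CommRing R] [CommRing L] [IsDomain L] {ζ η : L} {m : ℕ}

lemma pow_add_pow_eq_prod_freyFactor (hζ : IsPrimitiveRoot ζ (2 * m + 1)) (hη : ζ * η = 1)
    (x y : L) :
    x ^ (2 * m + 1) + y ^ (2 * m + 1) =
      ∏ k ∈ range (m + 1), freyFactor (fun k => ζ ^ k + η ^ k) x y k := by
  rw [pow_add_pow_eq_prod_range hζ (odd_two_mul_add_one m), prod_range_two_mul_add_one,
    prod_range_succ', mul_comm]
  congr 1
  · refine prod_congr rfl fun k hk => ?_
    have hk : k < m := mem_range.mp hk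
    have hmul : ζ ^ (k + 1) * η ^ (k + 1) = 1 := by rw [← mul_pow, hη, one_pow]
    have hinv : ζ ^ (2 * m - k) = η ^ (k + 1) :=
      calc ζ ^ (2 * m - k)
          = ζ ^ (2 * m - k) * (ζ ^ (k + 1) * η ^ (k + 1)) := by rw [hmul, mul_one]
        _ = ζ ^ (2 * m + 1) * η ^ (k + 1) := by
          rw [← mul_assoc, ← pow_add, show 2 * m - k + (k + 1) = 2 * m + 1 by omega]
        _ = η ^ (k + 1) := by rw [hζ.pow_eq_one, one_mul]
    rw [hinv, freyFactor, freyForm]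
    linear_combination y ^ 2 * hmul
  · rw [pow_zero, one_mul, freyFactor]

variable {φ : R →+* L} {a : ℕ → R}

lemma pow_add_pow_eq_prod_freyFactor_of_injective (hζ : IsPrimitiveRoot ζ (2 * m + 1))
    (hη : ζ * η = 1) (hφ : Function.Injective φ) (ha : ∀ k, φ (a k) = ζ ^ k + η ^ k) (x y : R) :
    x ^ (2 * m + 1) + y ^ (2 * m + 1) = ∏ k ∈ range (m + 1), freyFactor a x y k := by
  apply hφ
  have hφa : φ ∘ a = fun k => ζ ^ k + η ^ k := funext ha
  simp only [map_add, map_pow, map_prod, map_freyFactor, hφa, pow_add_pow_eq_prod_freyFactor hζ hη]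

lemma X_pow_add_one_eq_prod_freyFactor (hζ : IsPrimitiveRoot ζ (2 * m + 1))
    (hη : ζ * η = 1) (hφ : Function.Injective φ) (ha : ∀ k, φ (a k) = ζ ^ k + η ^ k) :
    (X : R[X]) ^ (2 * m + 1) + 1 = ∏ k ∈ range (m + 1), freyFactor (C ∘ a) X 1 k := by
  have hη' : (C ζ : L[X]) * C η = 1 := by rw [← C_mul, hη, C_1]
  have ha' (k : ℕ) : mapRingHom φ ((C ∘ a) k) = C ζ ^ k + C η ^ k := by
    simp only [Function.comp_apply, coe_mapRingHom, map_C, ha, C_add, C_pow]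
  simpa only [one_pow] using pow_add_pow_eq_prod_freyFactor_of_injective
    (hζ.map_of_injective C_injective) hη' (map_injective φ hφ) ha' X 1

end factorization

section separability

open Finset Polynomial

lemma not_isUnit_freyFactor_X_one {k : Type*} [CommRing k] [IsDomain k] (b : ℕ → k) (j : ℕ) :
    ¬IsUnit (freyFactor (C ∘ b) X 1 j) := by
  refine not_isUnit_of_natDegree_pos _ ?_
  cases j with
  | zero =>
    have hdeg : (X + 1 : k[X]).natDegree = 1 := by compute_degree!
    exact hdeg ▸ one_pos
  | succ j =>
    have hdeg : (X ^ 2 + C (b (j + 1)) * X * 1 + 1 ^ 2 : k[X]).natDegree = 2 := by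
      compute_degree!
    exact hdeg ▸ two_pos

lemma injOn_of_X_pow_add_one_eq_prod_freyFactor {k : Type*} [Field k] {n m : ℕ} {b : ℕ → k}
    (hn : (n : k) ≠ 0) (hb : b 0 = 2)
    (h : X ^ n + 1 = ∏ j ∈ range (m + 1), freyFactor (C ∘ b) X 1 j) :
    Set.InjOn b (Set.Iic m) := by
  have hsq : Squarefree (X ^ n + 1 : k[X]) := by
    simpa using (separable_X_pow_sub_C (-1) hn (neg_ne_zero.mpr one_ne_zero)).squarefree
  intro i hi j hj hij
  by_contra hne
  wlog hlt : i < j generalizing i j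
  · exact this hj hi hij.symm (Ne.symm hne) (by omega)
  have hdvd : freyFactor (C ∘ b) X 1 i ∣ freyFactor (C ∘ b) X 1 j := by
    obtain ⟨l, rfl⟩ := Nat.exists_eq_succ_of_ne_zero hlt.ne_bot
    have hC : (C ∘ b) 0 = 2 := by rw [Function.comp_apply, hb, map_ofNat]
    calc freyFactor (C ∘ b) X 1 i
        ∣ freyForm ((C ∘ b) i) X 1 := freyFactor_dvd_freyForm hC X 1 i
      _ = freyForm ((C ∘ b) (l + 1)) X 1 := by rw [Function.comp_apply, hij, Function.comp_apply]
  refine not_isUnit_freyFactor_X_one b i (hsq _ ?_)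
  calc freyFactor (C ∘ b) X 1 i * freyFactor (C ∘ b) X 1 i
      ∣ freyFactor (C ∘ b) X 1 i * freyFactor (C ∘ b) X 1 j := mul_dvd_mul_left _ hdvd
    _ = ∏ l ∈ {i, j}, freyFactor (C ∘ b) X 1 l := (prod_pair hne).symm
    _ ∣ ∏ l ∈ range (m + 1), freyFactor (C ∘ b) X 1 l := by
      refine prod_dvd_prod_of_subset _ _ _ ?_
      simp only [insert_subset_iff, singleton_subset_iff, mem_range_succ_iff]
      exact ⟨Set.mem_Iic.mp hi, Set.mem_Iic.mp hj⟩
    _ = X ^ n + 1 := h.symm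

lemma X_pow_add_one_eq_prod_freyFactor_map {R S : Type*} [CommRing R] [CommRing S] (ψ : R →+* S)
    {n m : ℕ} {a : ℕ → R} (h : X ^ n + 1 = ∏ k ∈ range (m + 1), freyFactor (C ∘ a) X 1 k) :
    X ^ n + 1 = ∏ k ∈ range (m + 1), freyFactor (C ∘ ψ ∘ a) X 1 k := by
  have hC : mapRingHom ψ ∘ C ∘ a = C ∘ ψ ∘ a := by
    funext k
    simp only [Function.comp_apply, coe_mapRingHom, map_C]
  have hX : mapRingHom ψ X = X := map_X ψ
  simpa only [map_add, map_pow, map_one, map_prod, map_freyFactor, hC, hX]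
    using congrArg (mapRingHom ψ) h

lemma sub_notMem_of_X_pow_add_one_eq_prod_freyFactor {R : Type*} [CommRing R] {P : Ideal R}
    [P.IsPrime] {n m : ℕ} {a : ℕ → R} (hn : (n : R) ∉ P) (ha : a 0 = 2)
    (h : X ^ n + 1 = ∏ k ∈ range (m + 1), freyFactor (C ∘ a) X 1 k)
    {i j : ℕ} (hi : i ≤ m) (hj : j ≤ m) (hij : i ≠ j) : a i - a j ∉ P := by
  let ψ := algebraMap R P.ResidueField
  have hn' : (n : P.ResidueField) ≠ 0 := by
    rwa [← map_natCast ψ, Ne, Ideal.algebraMap_residueField_eq_zero]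
  have ha' : (ψ ∘ a) 0 = 2 := by rw [Function.comp_apply, ha, map_ofNat]
  intro hmem
  rw [← Ideal.algebraMap_residueField_eq_zero, map_sub, sub_eq_zero] at hmem
  exact hij (injOn_of_X_pow_add_one_eq_prod_freyFactor hn' ha'
    (X_pow_add_one_eq_prod_freyFactor_map ψ h) hi hj hmem)

end separability

section primeIdeal

variable {R : Type*} [CommRing R] {P : Ideal R} [hP : P.IsPrime]

lemma mul_freyForm_notMem {a b u w x y : R} (hu : u ∉ P) (hw : w ∉ P) (hab : a - b ∉ P)
    (hxy : IsCoprime x y) (h : u * freyForm a x y ∈ P) : w * freyForm b x y ∉ P :=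
  hP.mul_notMem hw
    (freyForm_notMem_of_sub_notMem hab hxy ((hP.mem_or_mem h).resolve_left hu))

lemma cyclic_sum_notMem_of_mem {A B C : R} (hA : A ∈ P) (hB : B ∉ P) (hC : C ∉ P) :
    A * B + B * C + C * A ∉ P := by
  intro h
  have hBC : B * C ∈ P := by
    convert P.sub_mem h (P.mul_mem_left (B + C) hA) using 1
    ring
  exact hP.mul_notMem hB hC hBC

lemma cyclic_sum_notMem_of_mul_mem {A B C : R} (hAB : A ∈ P → B ∉ P) (hBC : B ∈ P → C ∉ P)
    (hCA : C ∈ P → A ∉ P) (h : A * B * C ∈ P) : A * B + B * C + C * A ∉ P := by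
  rcases hP.mem_or_mem h with hAB_mem | hC
  · rcases hP.mem_or_mem hAB_mem with hA | hB
    · exact cyclic_sum_notMem_of_mem hA (hAB hA) fun hC => hCA hC hA
    · rw [add_rotate]
      exact cyclic_sum_notMem_of_mem hB (hBC hB) fun hA => hAB hA hB
  · rw [← add_rotate]
    exact cyclic_sum_notMem_of_mem hC (hCA hC) fun hB => hBC hB hC

end primeIdeal

section rootOfUnity

variable {R L : Type*} [CommRing R] [CommRing L] {φ : R →+* L} {m : ℕ} {ζ η : L} {a : ℕ → R}

lemma apply_zero_eq_two_of_injective (hφ : Function.Injective φ)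
    (ha : ∀ k, φ (a k) = ζ ^ k + η ^ k) : a 0 = 2 :=
  hφ (by rw [ha, pow_zero, pow_zero, one_add_one_eq_two, map_ofNat])

variable [IsDomain L]

lemma sub_notMem_of_isPrimitiveRoot (hφ : Function.Injective φ)
    (hζ : IsPrimitiveRoot ζ (2 * m + 1)) (hη : ζ * η = 1)
    (ha : ∀ k, φ (a k) = ζ ^ k + η ^ k)
    {P : Ideal R} [P.IsPrime] (hP : ((2 * m + 1 : ℕ) : R) ∉ P)
    {i j : ℕ} (hi : i ≤ m) (hj : j ≤ m) (hij : i ≠ j) : a i - a j ∉ P :=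
  sub_notMem_of_X_pow_add_one_eq_prod_freyFactor hP (apply_zero_eq_two_of_injective hφ ha)
    (X_pow_add_one_eq_prod_freyFactor hζ hη hφ ha) hi hj hij

lemma dvd_addVal_freyForm [IsDedekindDomain R]
    {F : Type*} [Field F] [Algebra R F] [IsFractionRing R F] (v : HeightOneSpectrum R)
    (hφ : Function.Injective φ) (hζ : IsPrimitiveRoot ζ (2 * m + 1)) (hη : ζ * η = 1)
    (ha : ∀ k, φ (a k) = ζ ^ k + η ^ k) (hv : ((2 * m + 1 : ℕ) : R) ∉ v.asIdeal)
    {x y z : R} {p : ℕ} (hsol : x ^ (2 * m + 1) + y ^ (2 * m + 1) = z ^ p) (hz : z ≠ 0)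
    (hxy : IsCoprime x y) {k : ℕ} (hk : k ≤ m) :
    (p : ℤ) ∣ addVal v (algebraMap R F (freyForm (a k) x y)) := by
  have ha0 : a 0 = 2 := apply_zero_eq_two_of_injective hφ ha
  have hprod : ∏ i ∈ Finset.range (m + 1), freyFactor a x y i = z ^ p := by
    rw [← hsol, pow_add_pow_eq_prod_freyFactor_of_injective hζ hη hφ ha]
  have hcop : (Finset.range (m + 1) : Set ℕ).Pairwise fun i j =>
      freyFactor a x y i ∈ v.asIdeal → freyFactor a x y j ∉ v.asIdeal := by
    intro i hi j hj hij hmem_i hmem_j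
    rw [Finset.coe_range, Set.mem_Iio, Nat.lt_succ_iff] at hi hj
    exact freyForm_notMem_of_sub_notMem
      (sub_notMem_of_isPrimitiveRoot hφ hζ hη ha hv hi hj hij) hxy
      (v.asIdeal.mem_of_dvd (freyFactor_dvd_freyForm ha0 x y i) hmem_i)
      (v.asIdeal.mem_of_dvd (freyFactor_dvd_freyForm ha0 x y j) hmem_j)
  obtain ⟨e, -, he⟩ := exists_freyForm_eq_freyFactor_pow ha0 x y k
  rw [he, map_pow]
  exact dvd_addVal_pow v
    (dvd_addVal_of_prod_eq_pow v hz hprod hcop (Finset.mem_range_succ_iff.mpr hk)) e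

end rootOfUnity

theorem frey_curve_minimal_discriminant_outside_2r_general
    {R : Type*} [CommRing R] [IsDedekindDomain R]
    {F : Type*} [Field F] [Algebra R F] [IsFractionRing R F]
    {L : Type*} [Field L] {φ : R →+* L} (hφ : Function.Injective φ)
    {n : ℕ} (hn : Odd n) {ζ : L} (hζ : IsPrimitiveRoot ζ n)
    {a : ℕ → R} (ha : ∀ k, φ (a k) = ζ ^ k + ζ⁻¹ ^ k)
    {p : ℕ} {x y z : R} (hsol : x ^ n + y ^ n = z ^ p) (hz : z ≠ 0) (hxy : IsCoprime x y)
    {k₁ k₂ k₃ : ℕ}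
    (hk₁ : k₁ ≤ (n - 1) / 2) (hk₂ : k₂ ≤ (n - 1) / 2) (hk₃ : k₃ ≤ (n - 1) / 2)
    (hk12 : k₁ ≠ k₂) (hk23 : k₂ ≠ k₃) (hk13 : k₁ ≠ k₃)
    {A B C : R}
    (hA : A = (a k₃ - a k₂) * freyForm (a k₁) x y)
    (hB : B = (a k₁ - a k₃) * freyForm (a k₂) x y)
    (hC : C = (a k₂ - a k₁) * freyForm (a k₃) x y)
    {Δ c₄ : R} (hΔ : Δ = 2 ^ 4 * (A * B * C) ^ 2) (hc₄ : c₄ = -(2 ^ 4 * (A * B + B * C + C * A)))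
    (𝔭 : HeightOneSpectrum R) (h2 : (2 : R) ∉ 𝔭.asIdeal) (hn𝔭 : (n : R) ∉ 𝔭.asIdeal) :
    (p : ℤ) ∣ addVal 𝔭 (algebraMap R F Δ) ∧
      (A * B * C ∈ 𝔭.asIdeal → addVal 𝔭 (algebraMap R F c₄) = 0) := by
  obtain ⟨m, rfl⟩ := hn
  rw [Nat.add_sub_cancel, Nat.mul_div_cancel_left m two_pos] at hk₁ hk₂ hk₃
  have hprime : 𝔭.asIdeal.IsPrime := 𝔭.isPrime
  have hη : ζ * ζ⁻¹ = 1 := mul_inv_cancel₀ (hζ.ne_zero (Nat.succ_ne_zero _))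
  have hsub {i j : ℕ} (hi : i ≤ m) (hj : j ≤ m) (hij : i ≠ j) : a i - a j ∉ 𝔭.asIdeal :=
    sub_notMem_of_isPrimitiveRoot hφ hζ hη ha hn𝔭 hi hj hij
  have hα := hsub hk₃ hk₂ hk23.symm
  have hβ := hsub hk₁ hk₃ hk13
  have hγ := hsub hk₂ hk₁ hk12.symm
  subst hA hB hC hΔ hc₄
  constructor
  · have hdvd {u : R} {k : ℕ} (hu : u ∉ 𝔭.asIdeal) (hk : k ≤ m) :
        (p : ℤ) ∣ addVal 𝔭 (algebraMap R F (u * freyForm (a k) x y)) := by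
      rw [map_mul]
      exact dvd_addVal_mul 𝔭 (dvd_addVal_algebraMap_of_notMem 𝔭 p hu)
        (dvd_addVal_freyForm 𝔭 hφ hζ hη ha hn𝔭 hsol hz hxy hk)
    exact dvd_addVal_two_pow_four_mul_sq 𝔭 h2 (hdvd hα hk₁) (hdvd hβ hk₂) (hdvd hγ hk₃)
  · intro hABC
    have h16 : (2 : R) ^ 4 ∉ 𝔭.asIdeal := fun h => h2 (hprime.mem_of_pow_mem 4 h)
    refine addVal_algebraMap_eq_zero 𝔭
      (neg_mem_iff.not.mpr (hprime.mul_notMem h16 (cyclic_sum_notMem_of_mul_mem ?_ ?_ ?_ hABC)))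
    · exact mul_freyForm_notMem hα hβ (hsub hk₁ hk₂ hk12) hxy
    · exact mul_freyForm_notMem hβ hγ (hsub hk₂ hk₃ hk23) hxy
    · exact mul_freyForm_notMem hγ hα (hsub hk₃ hk₁ hk13.symm) hxy

theorem frey_curve_minimal_discriminant_outside_2r
    (r : ℕ) (hr : r.Prime) (hr5 : 5 ≤ r)
    (K : Type) [Field K] [NumberField K]
    (hTR : ∀ v : InfinitePlace K, v.IsReal)
    (ζ : AlgebraicClosure K) (hζ : IsPrimitiveRoot ζ r)
    (Kp : IntermediateField K (AlgebraicClosure K)) [NumberField Kp]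
    (hKp : Kp = K⟮ζ + ζ⁻¹⟯)
    -- `a k` is `ζ_r^k + ζ_r^{-k}` as an element of `𝒪_{K⁺}`
    (a : ℕ → 𝓞 Kp) (ha : ∀ k, ((a k : Kp) : AlgebraicClosure K) = ζ ^ k + ζ⁻¹ ^ k)
    (p : ℕ) (hp : p.Prime)
    (x y z : 𝓞 Kp) (hsol : x ^ r + y ^ r = z ^ p)
    (hnt : x * y * z ≠ 0)
    (hxy : IsCoprime x y) (hyz : IsCoprime y z) (hxz : IsCoprime x z)
    (k₁ k₂ k₃ : ℕ)
    (hk₁ : k₁ ≤ (r - 1) / 2) (hk₂ : k₂ ≤ (r - 1) / 2) (hk₃ : k₃ ≤ (r - 1) / 2)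
    (hk12 : k₁ ≠ k₂) (hk23 : k₂ ≠ k₃) (hk13 : k₁ ≠ k₃)
    -- the Frey construction
    (A B C : 𝓞 Kp)
    (hA : A = (a k₃ - a k₂) * (x ^ 2 + a k₁ * x * y + y ^ 2))
    (hB : B = (a k₁ - a k₃) * (x ^ 2 + a k₂ * x * y + y ^ 2))
    (hC : C = (a k₂ - a k₁) * (x ^ 2 + a k₃ * x * y + y ^ 2))
    -- discriminant and `c₄`-invariant of `Y² = X(X−A)(X+B)`
    (Δ c₄ : 𝓞 Kp)
    (hΔ : Δ = 2 ^ 4 * (A * B * C) ^ 2)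
    (hc₄ : c₄ = -(2 ^ 4 * (A * B + B * C + C * A))) :
    ∀ 𝔭 : HeightOneSpectrum (𝓞 Kp),
      (2 : 𝓞 Kp) ∉ 𝔭.asIdeal → (r : 𝓞 Kp) ∉ 𝔭.asIdeal →
      (p : ℤ) ∣ addVal 𝔭 ((Δ : Kp)) ∧
      (A * B * C ∈ 𝔭.asIdeal → addVal 𝔭 ((c₄ : Kp)) = 0) := by
  exact frey_curve_minimal_discriminant_outside_2r_general
    (φ := (algebraMap Kp (AlgebraicClosure K)).comp (algebraMap (𝓞 Kp) Kp))
    ((algebraMap Kp _).injective.comp RingOfIntegers.coe_injective) (hr.odd_of_ne_two (by omega))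
    hζ ha hsol (right_ne_zero_of_mul hnt) hxy hk₁ hk₂ hk₃ hk12 hk23 hk13 hA hB hC hΔ hc₄
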